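/- Let R_V(z) = z(6z + 3)(6z + 5). If J_V ⊆ [−1, 0] is nonempty, closed, satisfies J_V = R_V^{−1}(J_V) ∩ [−1, 0], and is contained in every nonempty closed subset of [−1,0] satisfying this set equation, then 0.49195457005266 ≤ dim_H(J_V) ≤ 0.49195457005267. -/

import Mathlib

open Set MeasureTheory

/-- The decimation polynomial `R_V(z) = z(6z+3)(6z+5)` associated with the
Vicsek set. -/
def RV (z : ℝ) : ℝ := z * (6 * z + 3) * (6 * z + 5)

/-!
The three inverse branches of `RV` on `[-1, 0]` contract by a factor of at least `4`, have images at
a positive distance from each other, and have bounded distortion. For such a system, a positive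
function `f`, bounded away from `0` and `∞`, with `T_s f ≤ f` for the transfer operator
`T_s f x = ∑ i, ρ i x ^ s * f (S i x)` forces `dim ≤ s` (sum the diameters of the cylinders), and
`f ≤ T_s f` forces `s ≤ dim` (iterating yields a mass distribution on the cylinders).

An approximate eigenfunction that is polynomial on each of the three pieces serves for both
bounds. Summand by summand, the comparison says that certain log ratios are tiny; these vanish up
to rounding at the centre of each piece's preimage and have tiny derivatives on it, which is a
finite check in rational arithmetic.
-/

section HausdorffMeasure

variable {X : Type*} [MetricSpace X] {J : Set X} {t : ℝ}

lemma dist_le_of_mem_thickening {U : Set X} (hU : Bornology.IsBounded U) {δ : ℝ} {x y : X}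
    (hx : x ∈ Metric.thickening δ U) (hy : y ∈ Metric.thickening δ U) :
    dist x y ≤ Metric.diam U + 2 * δ := by
  obtain ⟨u, hu, hxu⟩ := Metric.mem_thickening_iff.1 hx
  obtain ⟨v, hv, hyv⟩ := Metric.mem_thickening_iff.1 hy
  have huv := Metric.dist_le_diam_of_mem hU hu hv
  have h4 := dist_triangle4 x u v y
  rw [dist_comm v y] at h4
  linarith

lemma exists_ofReal_diam_add_rpow_le (ht : 0 < t) {U : Set X} (hU : Bornology.IsBounded U)
    {η : ENNReal} (hη : 0 < η) : ∃ δ > 0,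
      ENNReal.ofReal ((Metric.diam U + 2 * δ) ^ t) ≤
        (⨆ _ : U.Nonempty, Metric.ediam U ^ t) + η := by
  have hdiam : ENNReal.ofReal (Metric.diam U ^ t) ≤ ⨆ _ : U.Nonempty, Metric.ediam U ^ t := by
    rcases U.eq_empty_or_nonempty with rfl | hne
    · simp [Real.zero_rpow ht.ne']
    · rw [ciSup_pos hne, ← ENNReal.ofReal_rpow_of_nonneg Metric.diam_nonneg ht.le, Metric.diam,
        ENNReal.ofReal_toReal hU.ediam_ne_top]
  have hcont : Continuous fun δ : ℝ => ENNReal.ofReal ((Metric.diam U + 2 * δ) ^ t) :=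
    ENNReal.continuous_ofReal.comp ((by fun_prop : Continuous fun δ : ℝ => Metric.diam U + 2 * δ)
      |>.rpow_const fun _ => Or.inr ht.le)
  have hlt : ENNReal.ofReal ((Metric.diam U + 2 * 0) ^ t) <
      (⨆ _ : U.Nonempty, Metric.ediam U ^ t) + η := by
    rw [mul_zero, add_zero]
    exact (ENNReal.lt_add_right ENNReal.ofReal_ne_top hη.ne').trans_le (by gcongr)
  have hev := (hcont.continuousAt.eventually_lt continuousAt_const hlt).filter_mono
    (nhdsWithin_le_nhds (s := Ioi 0))
  obtain ⟨δ, hδ, hpos⟩ := (hev.and self_mem_nhdsWithin).exists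
  exact ⟨δ, hpos, hδ.le⟩

lemma exists_open_cover_of_hausdorffMeasure_eq_zero [MeasurableSpace X] [BorelSpace X]
    (ht : 0 < t) (hJ : Measure.hausdorffMeasure t J = 0) {ε : ENNReal} (hε : 0 < ε) :
    ∃ (V : ℕ → Set X) (r : ℕ → ℝ), (∀ n, IsOpen (V n)) ∧ (J ⊆ ⋃ n, V n) ∧ (∀ n, 0 < r n) ∧
      (∀ n, ∀ x ∈ V n, ∀ y ∈ V n, dist x y ≤ r n) ∧ ∑' n, ENNReal.ofReal (r n ^ t) < ε := by
  rw [Measure.hausdorffMeasure_apply] at hJ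
  have hinf : (⨅ (U : ℕ → Set X) (_ : J ⊆ ⋃ n, U n) (_ : ∀ n, Metric.ediam (U n) ≤ 1),
      ∑' n, ⨆ _ : (U n).Nonempty, Metric.ediam (U n) ^ t) < ε / 2 := by
    rw [(iSup₂_eq_bot.1 hJ) 1 one_pos]
    exact ENNReal.half_pos hε.ne'
  simp only [iInf_lt_iff] at hinf
  obtain ⟨U, hcover, hdiam, hsum⟩ := hinf
  obtain ⟨η, hη, hηsum⟩ := ENNReal.exists_pos_sum_of_countable' (ENNReal.half_pos hε.ne').ne' ℕ
  have hbdd (n : ℕ) : Bornology.IsBounded (U n) :=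
    Metric.isBounded_iff_ediam_ne_top.2 (ne_top_of_le_ne_top ENNReal.one_ne_top (hdiam n))
  choose δ hδ hδη using fun n => exists_ofReal_diam_add_rpow_le ht (hbdd n) (hη n)
  refine ⟨fun n => Metric.thickening (δ n) (U n), fun n => Metric.diam (U n) + 2 * δ n,
    fun n => Metric.isOpen_thickening,
    hcover.trans (iUnion_mono fun n => Metric.self_subset_thickening (hδ n) _),
    fun n => add_pos_of_nonneg_of_pos Metric.diam_nonneg (mul_pos two_pos (hδ n)),
    fun n x hx y hy => dist_le_of_mem_thickening (hbdd n) hx hy, ?_⟩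
  calc ∑' n, ENNReal.ofReal ((Metric.diam (U n) + 2 * δ n) ^ t)
      ≤ ∑' n, ((⨆ _ : (U n).Nonempty, Metric.ediam (U n) ^ t) + η n) := ENNReal.tsum_le_tsum hδη
    _ = ∑' n, (⨆ _ : (U n).Nonempty, Metric.ediam (U n) ^ t) + ∑' n, η n := ENNReal.tsum_add
    _ < ε / 2 + ε / 2 := ENNReal.add_lt_add hsum hηsum
    _ = ε := ENNReal.add_halves ε

theorem le_dimH_of_forall_finite_cover (hJ : IsCompact J) {c : ℝ} (hc : 0 < c)
    (hcover : ∀ (F : Finset ℕ) (V : ℕ → Set X) (r : ℕ → ℝ), (∀ n, 0 < r n) →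
      (∀ n, ∀ x ∈ V n, ∀ y ∈ V n, dist x y ≤ r n) → J ⊆ ⋃ n ∈ F, V n → c ≤ ∑ n ∈ F, r n ^ t) :
    ENNReal.ofReal t ≤ dimH J := by
  borelize X
  rcases le_or_gt t 0 with ht | ht
  · simp [ENNReal.ofReal_of_nonpos ht]
  refine le_dimH_of_hausdorffMeasure_ne_zero (d := t.toNNReal) fun hzero => ?_
  rw [Real.coe_toNNReal t ht.le] at hzero
  obtain ⟨V, r, hopen, hV, hr, hdist, hsum⟩ :=
    exists_open_cover_of_hausdorffMeasure_eq_zero ht hzero (ENNReal.ofReal_pos.2 hc)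
  obtain ⟨F, hF⟩ := hJ.elim_finite_subcover V hopen hV
  refine hsum.not_ge ?_
  calc ENNReal.ofReal c ≤ ENNReal.ofReal (∑ n ∈ F, r n ^ t) :=
        ENNReal.ofReal_le_ofReal (hcover F V r hr hdist hF)
    _ = ∑ n ∈ F, ENNReal.ofReal (r n ^ t) :=
        ENNReal.ofReal_sum_of_nonneg fun n _ => Real.rpow_nonneg (hr n).le t
    _ ≤ ∑' n, ENNReal.ofReal (r n ^ t) := ENNReal.sum_le_tsum F

end HausdorffMeasure

section TransferOperator

variable {X ι : Type*} (S : ι → X → X) (ρ : ι → X → ℝ)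

/-- The product of the ratios met when the maps `S i` are applied to a point in the order of a word,
whose last letter acts first: the infinitesimal contraction ratio of `w.foldr S` if `ρ i` is that
of `S i`. -/
def wordRatio : List ι → X → ℝ
  | [], _ => 1
  | i :: w, x => ρ i (w.foldr S x) * wordRatio w x

/-- The transfer operator `g ↦ ∑ i, ρ i ^ t * g ∘ S i` of the system of maps `S i` with contraction
ratios `ρ i`. -/
noncomputable def transferOperator [Fintype ι] (t : ℝ) : Module.End ℝ (X → ℝ) where
  toFun g x := ∑ i, ρ i x ^ t * g (S i x)
  map_add' g g' := funext fun x => by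
    simp only [Pi.add_apply, mul_add, Finset.sum_add_distrib]
  map_smul' a g := funext fun x => by
    simp only [Pi.smul_apply, smul_eq_mul, RingHom.id_apply, mul_left_comm _ a, Finset.mul_sum]

variable {S ρ}

lemma wordRatio_pos (hρ : ∀ i x, 0 < ρ i x) (w : List ι) (x : X) : 0 < wordRatio S ρ w x := by
  induction w with
  | nil => exact one_pos
  | cons i w ih => exact mul_pos (hρ i _) ih

lemma wordRatio_le_pow {q : ℝ} (hρ : ∀ i x, 0 < ρ i x) (hq : ∀ i x, ρ i x ≤ q) (w : List ι)
    (x : X) : wordRatio S ρ w x ≤ q ^ w.length := by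
  induction w with
  | nil => exact le_rfl
  | cons i w ih =>
    rw [List.length_cons, pow_succ']
    exact mul_le_mul (hq i _) ih (wordRatio_pos hρ w x).le ((hρ i _).le.trans (hq i x))

lemma exists_foldr_ofFn_eq (hcover : ∀ y, ∃ i x, S i x = y) (n : ℕ) (y : X) :
    ∃ (w : Fin n → ι) (x : X), (List.ofFn w).foldr S x = y := by
  induction n generalizing y with
  | zero => exact ⟨Fin.elim0, y, by simp⟩
  | succ n ih =>
    obtain ⟨i, z, rfl⟩ := hcover y
    obtain ⟨w, x, rfl⟩ := ih z
    exact ⟨Fin.cons i w, x, by simp⟩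

lemma le_smul_sum_indicator {b : ℝ} {f : X → ℝ} {F : Finset ℕ} {V : ℕ → Set X} (hb : 0 ≤ b)
    (hfb : ∀ x, f x ≤ b) (hV : univ ⊆ ⋃ n ∈ F, V n) : f ≤ b • ∑ n ∈ F, (V n).indicator 1 := by
  intro x
  obtain ⟨n, hn, hx⟩ := mem_iUnion₂.1 (hV (mem_univ x))
  have hone : 1 ≤ ∑ n ∈ F, (V n).indicator (1 : X → ℝ) x := by
    refine (indicator_of_mem hx (1 : X → ℝ)).ge.trans ?_
    exact Finset.single_le_sum (f := fun n => (V n).indicator (1 : X → ℝ) x)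
      (fun k _ => indicator_nonneg (fun _ _ => zero_le_one) x) hn
  simpa [Finset.sum_apply] using (hfb x).trans (le_mul_of_one_le_right hb hone)

variable [Fintype ι] {t : ℝ}

lemma transferOperator_mono (hρ : ∀ i x, 0 < ρ i x) : Monotone (transferOperator S ρ t) :=
  fun _ _ hg x => Finset.sum_le_sum fun i _ =>
    mul_le_mul_of_nonneg_left (hg (S i x)) (Real.rpow_nonneg (hρ i x).le t)

lemma transferOperator_pow_mono (hρ : ∀ i x, 0 < ρ i x) (n : ℕ) :
    Monotone (transferOperator S ρ t ^ n) := by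
  rw [Module.End.coe_pow]
  exact (transferOperator_mono hρ).iterate n

lemma transferOperator_pow_apply (hρ : ∀ i x, 0 < ρ i x) (n : ℕ) (g : X → ℝ) (x : X) :
    (transferOperator S ρ t ^ n) g x = ∑ w : Fin n → ι,
      wordRatio S ρ (List.ofFn w) x ^ t * g ((List.ofFn w).foldr S x) := by
  induction n generalizing g with
  | zero => simp [wordRatio]
  | succ n ih =>
    rw [pow_succ, Module.End.mul_apply, ih,
      ← (Fin.consEquiv fun _ : Fin (n + 1) => ι).sum_comp, Fintype.sum_prod_type_right]
    refine Finset.sum_congr rfl fun w _ => ?_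
    simp only [transferOperator, LinearMap.coe_mk, AddHom.coe_mk, Finset.mul_sum, Fin.consEquiv,
      Equiv.coe_fn_mk, List.ofFn_cons, wordRatio, List.foldr_cons]
    refine Finset.sum_congr rfl fun i _ => ?_
    rw [Real.mul_rpow (hρ i _).le (wordRatio_pos hρ _ x).le]
    ring

lemma sum_wordRatio_rpow_le {a : ℝ} {f : X → ℝ} (hρ : ∀ i x, 0 < ρ i x) (ha : 0 < a)
    (haf : ∀ x, a ≤ f x) (hf : transferOperator S ρ t f ≤ f) (n : ℕ) (x : X) :
    ∑ w : Fin n → ι, wordRatio S ρ (List.ofFn w) x ^ t ≤ f x / a := by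
  rw [le_div_iff₀ ha, Finset.sum_mul]
  calc ∑ w : Fin n → ι, wordRatio S ρ (List.ofFn w) x ^ t * a
      ≤ ∑ w : Fin n → ι, wordRatio S ρ (List.ofFn w) x ^ t * f ((List.ofFn w).foldr S x) :=
        Finset.sum_le_sum fun w _ =>
          mul_le_mul_of_nonneg_left (haf _) (Real.rpow_nonneg (wordRatio_pos hρ _ x).le t)
    _ = (transferOperator S ρ t ^ n) f x := (transferOperator_pow_apply hρ n f x).symm
    _ ≤ f x := by
      rw [Module.End.pow_apply]
      exact (transferOperator_mono hρ).antitone_iterate_of_map_le hf n.zero_le x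

end TransferOperator

/-- The maps `S i` have bounded distortion with respect to the ratios `ρ i ≤ q < 1` if each
composition `w.foldr S` changes distances by its contraction ratio at any point, up to a constant
factor `K` that does not depend on the word `w`. -/
structure HasBoundedDistortion {X ι : Type*} [MetricSpace X] (S : ι → X → X) (ρ : ι → X → ℝ)
    (K q : ℝ) : Prop where
  const_pos : 0 < K
  bound_lt_one : q < 1
  ratio_pos (i : ι) (x : X) : 0 < ρ i x
  ratio_le (i : ι) (x : X) : ρ i x ≤ q
  dist_le (w : List ι) (x y z : X) :
    dist (w.foldr S x) (w.foldr S y) ≤ K * wordRatio S ρ w z * dist x y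
  le_dist (w : List ι) (x y z : X) :
    wordRatio S ρ w z * dist x y ≤ K * dist (w.foldr S x) (w.foldr S y)

namespace HasBoundedDistortion

variable {X ι : Type*} [MetricSpace X] {S : ι → X → X} {ρ : ι → X → ℝ} {K q gap s t a b : ℝ}
  {f : X → ℝ}

lemma dist_foldr_le [BoundedSpace X] (hq : 0 ≤ q)
    (hlip : ∀ i x y, dist (S i x) (S i y) ≤ q * dist x y) (w : List ι) (x y : X) :
    dist (w.foldr S x) (w.foldr S y) ≤ q ^ w.length * Metric.diam (univ : Set X) := by
  induction w with
  | nil =>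
    simpa using Metric.dist_le_diam_of_mem (Bornology.IsBounded.all _) (mem_univ x) (mem_univ y)
  | cons i w ih =>
    rw [List.length_cons, pow_succ', mul_assoc]
    exact (hlip i _ _).trans (mul_le_mul_of_nonneg_left ih hq)

lemma dist_foldr_le_prod_mul {e : ℕ → ℝ} (he : ∀ n, 0 ≤ e n) (hρ : ∀ i x, 0 < ρ i x) {x y z : X}
    (hstep : ∀ i (w : List ι), dist (S i (w.foldr S x)) (S i (w.foldr S y)) ≤
      e w.length * (ρ i (w.foldr S z) * dist (w.foldr S x) (w.foldr S y))) (w : List ι) :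
    dist (w.foldr S x) (w.foldr S y) ≤
      (∏ k ∈ Finset.range w.length, e k) * (wordRatio S ρ w z * dist x y) := by
  induction w with
  | nil => simp [wordRatio]
  | cons i w ih =>
    calc dist (S i (w.foldr S x)) (S i (w.foldr S y))
        ≤ e w.length * (ρ i (w.foldr S z) * dist (w.foldr S x) (w.foldr S y)) := hstep i w
      _ ≤ e w.length * (ρ i (w.foldr S z) *
          ((∏ k ∈ Finset.range w.length, e k) * (wordRatio S ρ w z * dist x y))) :=
        mul_le_mul_of_nonneg_left (mul_le_mul_of_nonneg_left ih (hρ i _).le) (he _)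
      _ = _ := by
        rw [List.length_cons, Finset.prod_range_succ, wordRatio]
        ring

lemma mul_dist_le_prod_mul {e : ℕ → ℝ} (he : ∀ n, 0 ≤ e n) (hρ : ∀ i x, 0 < ρ i x) {x y z : X}
    (hstep : ∀ i (w : List ι), ρ i (w.foldr S z) * dist (w.foldr S x) (w.foldr S y) ≤
      e w.length * dist (S i (w.foldr S x)) (S i (w.foldr S y))) (w : List ι) :
    wordRatio S ρ w z * dist x y ≤
      (∏ k ∈ Finset.range w.length, e k) * dist (w.foldr S x) (w.foldr S y) := by
  induction w with
  | nil => simp [wordRatio]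
  | cons i w ih =>
    have hprod : 0 ≤ ∏ k ∈ Finset.range w.length, e k := Finset.prod_nonneg fun k _ => he k
    calc ρ i (w.foldr S z) * wordRatio S ρ w z * dist x y
        = ρ i (w.foldr S z) * (wordRatio S ρ w z * dist x y) := mul_assoc _ _ _
      _ ≤ ρ i (w.foldr S z) *
          ((∏ k ∈ Finset.range w.length, e k) * dist (w.foldr S x) (w.foldr S y)) :=
        mul_le_mul_of_nonneg_left ih (hρ i _).le
      _ = (∏ k ∈ Finset.range w.length, e k) *
          (ρ i (w.foldr S z) * dist (w.foldr S x) (w.foldr S y)) := by ring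
      _ ≤ (∏ k ∈ Finset.range w.length, e k) *
          (e w.length * dist (S i (w.foldr S x)) (S i (w.foldr S y))) :=
        mul_le_mul_of_nonneg_left (hstep i w) hprod
      _ = _ := by
        rw [List.length_cons, Finset.prod_range_succ, mul_assoc, List.foldr_cons, List.foldr_cons]

lemma prod_exp_mul_pow_le {c : ℝ} (hc : 0 ≤ c) (hq0 : 0 ≤ q) (hq1 : q < 1) (n : ℕ) :
    ∏ k ∈ Finset.range n, Real.exp (c * q ^ k) ≤ Real.exp (c / (1 - q)) := by
  rw [← Real.exp_sum, ← Finset.mul_sum, Real.exp_le_exp, div_eq_mul_inv,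
    ← tsum_geometric_of_lt_one hq0 hq1]
  exact mul_le_mul_of_nonneg_left ((summable_geometric_of_lt_one hq0 hq1).sum_le_tsum _
    fun k _ => pow_nonneg hq0 k) hc

-- A word of length `k` brings points within distance `q ^ k * diam univ`, so the distortions of
-- the successive maps multiply to the exponential of a geometric series.
theorem of_le_exp_mul [BoundedSpace X] {c : ℝ} (hc : 0 ≤ c) (hq0 : 0 ≤ q) (hq1 : q < 1)
    (hρ : ∀ i x, 0 < ρ i x) (hρq : ∀ i x, ρ i x ≤ q)
    (hlip : ∀ i x y, dist (S i x) (S i y) ≤ q * dist x y)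
    (hle : ∀ i x y z, dist (S i x) (S i y) ≤
      Real.exp (c * max (dist x z) (dist y z)) * (ρ i z * dist x y))
    (hge : ∀ i x y z, ρ i z * dist x y ≤
      Real.exp (c * max (dist x z) (dist y z)) * dist (S i x) (S i y)) :
    HasBoundedDistortion S ρ (Real.exp (c * Metric.diam (univ : Set X) / (1 - q))) q := by
  set C := c * Metric.diam (univ : Set X) with hC
  have hC0 : 0 ≤ C := mul_nonneg hc Metric.diam_nonneg
  have hexp (w : List ι) (x y z : X) :
      Real.exp (c * max (dist (w.foldr S x) (w.foldr S z)) (dist (w.foldr S y) (w.foldr S z))) ≤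
        Real.exp (C * q ^ w.length) := by
    rw [Real.exp_le_exp, hC, mul_assoc, mul_comm _ (q ^ _)]
    exact mul_le_mul_of_nonneg_left
      (max_le (dist_foldr_le hq0 hlip w x z) (dist_foldr_le hq0 hlip w y z)) hc
  refine ⟨Real.exp_pos _, hq1, hρ, hρq, fun w x y z => ?_, fun w x y z => ?_⟩
  · rw [mul_assoc]
    exact (dist_foldr_le_prod_mul (fun k => (Real.exp_pos (C * q ^ k)).le) hρ
      (fun i w => (hle i _ _ _).trans (mul_le_mul_of_nonneg_right (hexp w x y z)
        (mul_nonneg (hρ i _).le dist_nonneg))) w).trans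
      (mul_le_mul_of_nonneg_right (prod_exp_mul_pow_le hC0 hq0 hq1 _)
        (mul_nonneg (wordRatio_pos hρ w z).le dist_nonneg))
  · exact (mul_dist_le_prod_mul (fun k => (Real.exp_pos (C * q ^ k)).le) hρ
      (fun i w => (hge i _ _ _).trans (mul_le_mul_of_nonneg_right (hexp w x y z) dist_nonneg))
      w).trans (mul_le_mul_of_nonneg_right (prod_exp_mul_pow_le hC0 hq0 hq1 _) dist_nonneg)


lemma ediam_range_foldr_le [BoundedSpace X] (h : HasBoundedDistortion S ρ K q) (w : List ι)
    (z : X) : Metric.ediam (range (w.foldr S)) ≤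
      ENNReal.ofReal (K * Metric.diam (univ : Set X) * wordRatio S ρ w z) := by
  refine Metric.ediam_le ?_
  rintro _ ⟨x, rfl⟩ _ ⟨y, rfl⟩
  rw [edist_dist]
  refine ENNReal.ofReal_le_ofReal ((h.dist_le w x y z).trans ?_)
  rw [mul_right_comm]
  have hw := wordRatio_pos (S := S) h.ratio_pos w z
  have hK := h.const_pos
  gcongr
  exact Metric.dist_le_diam_of_mem (Bornology.IsBounded.all _) (mem_univ x) (mem_univ y)

lemma sum_ediam_range_foldr_rpow_le [Fintype ι] [BoundedSpace X]
    (h : HasBoundedDistortion S ρ K q) (hs : 0 ≤ s) (ha : 0 < a) (haf : ∀ x, a ≤ f x)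
    (hf : transferOperator S ρ s f ≤ f) (n : ℕ) (x : X) :
    ∑ w : Fin n → ι, Metric.ediam (range ((List.ofFn w).foldr S)) ^ s ≤
      ENNReal.ofReal ((K * Metric.diam (univ : Set X)) ^ s * (f x / a)) := by
  set C := K * Metric.diam (univ : Set X)
  have hC : 0 ≤ C := mul_nonneg h.const_pos.le Metric.diam_nonneg
  have hr (w : Fin n → ι) : 0 ≤ wordRatio S ρ (List.ofFn w) x := (wordRatio_pos h.ratio_pos _ x).le
  calc ∑ w : Fin n → ι, Metric.ediam (range ((List.ofFn w).foldr S)) ^ s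
      ≤ ∑ w : Fin n → ι, ENNReal.ofReal (C ^ s * wordRatio S ρ (List.ofFn w) x ^ s) :=
        Finset.sum_le_sum fun w _ => by
          rw [← Real.mul_rpow hC (hr w),
            ← ENNReal.ofReal_rpow_of_nonneg (mul_nonneg hC (hr w)) hs]
          exact ENNReal.rpow_le_rpow (h.ediam_range_foldr_le _ x) hs
    _ = ENNReal.ofReal (C ^ s * ∑ w : Fin n → ι, wordRatio S ρ (List.ofFn w) x ^ s) := by
        rw [Finset.mul_sum, ENNReal.ofReal_sum_of_nonneg fun w _ =>
          mul_nonneg (Real.rpow_nonneg hC s) (Real.rpow_nonneg (hr w) s)]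
    _ ≤ _ := ENNReal.ofReal_le_ofReal (mul_le_mul_of_nonneg_left
        (sum_wordRatio_rpow_le h.ratio_pos ha haf hf n x) (Real.rpow_nonneg hC s))

theorem dimH_univ_le [Fintype ι] [BoundedSpace X] (h : HasBoundedDistortion S ρ K q)
    (hcover : ∀ y, ∃ i x, S i x = y) (hs : 0 ≤ s) (ha : 0 < a) (haf : ∀ x, a ≤ f x)
    (hf : transferOperator S ρ s f ≤ f) : dimH (univ : Set X) ≤ ENNReal.ofReal s := by
  borelize X
  rcases isEmpty_or_nonempty X with hX | ⟨⟨x₀⟩⟩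
  · simp [univ_eq_empty_iff.2 hX]
  set C := K * Metric.diam (univ : Set X)
  obtain ⟨i₀, -⟩ := hcover x₀
  have hq : 0 ≤ q := (h.ratio_pos i₀ x₀).le.trans (h.ratio_le i₀ x₀)
  have hlim : Filter.Tendsto (fun n : ℕ => ENNReal.ofReal (C * q ^ n)) Filter.atTop (nhds 0) := by
    simpa using ENNReal.tendsto_ofReal
      ((tendsto_pow_atTop_nhds_zero_of_lt_one hq h.bound_lt_one).const_mul C)
  have hdiam (n : ℕ) (w : Fin n → ι) :
      Metric.ediam (range ((List.ofFn w).foldr S)) ≤ ENNReal.ofReal (C * q ^ n) :=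
    (h.ediam_range_foldr_le _ x₀).trans (ENNReal.ofReal_le_ofReal (mul_le_mul_of_nonneg_left
      (by simpa using wordRatio_le_pow h.ratio_pos h.ratio_le (List.ofFn w) x₀)
      (mul_nonneg h.const_pos.le Metric.diam_nonneg)))
  have hsub (n : ℕ) : (univ : Set X) ⊆ ⋃ w : Fin n → ι, range ((List.ofFn w).foldr S) :=
    fun y _ => mem_iUnion.2 (exists_foldr_ofFn_eq hcover n y)
  have hmeasure : μH[s] (univ : Set X) ≤ ENNReal.ofReal (C ^ s * (f x₀ / a)) :=
    (Measure.hausdorffMeasure_le_liminf_sum s univ _ hlim _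
      (Filter.Eventually.of_forall hdiam) (Filter.Eventually.of_forall hsub)).trans
      (Filter.liminf_le_of_le (by isBoundedDefault) fun b hb =>
        let ⟨n, hn⟩ := hb.exists
        hn.trans (h.sum_ediam_range_foldr_rpow_le hs ha haf hf n x₀))
  lift s to NNReal using hs
  rw [ENNReal.ofReal_coe_nnreal]
  exact dimH_le_of_hausdorffMeasure_ne_top (hmeasure.trans_lt ENNReal.ofReal_lt_top).ne

lemma injective (h : HasBoundedDistortion S ρ K q) (i : ι) : Function.Injective (S i) := by
  intro x y hxy
  have hle := h.le_dist [i] x y x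
  simp only [List.foldr_cons, List.foldr_nil, hxy, dist_self, mul_zero] at hle
  exact dist_le_zero.1 (nonpos_of_mul_nonpos_right hle (wordRatio_pos h.ratio_pos [i] x))

lemma eq_of_foldr_eq (h : HasBoundedDistortion S ρ K q) (hgap : 0 < gap)
    (hsep : ∀ i k x y, i ≠ k → gap ≤ dist (S i x) (S k y)) {w u : List ι}
    (hlen : w.length = u.length) {x y : X} (hxy : w.foldr S x = u.foldr S y) : w = u := by
  induction w generalizing u with
  | nil => exact (List.length_eq_zero_iff.1 hlen.symm).symm
  | cons i w ih =>
    obtain _ | ⟨k, u⟩ := u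
    · simp at hlen
    have hik : i = k := by
      by_contra hne
      have := hsep i k (w.foldr S x) (u.foldr S y) hne
      rw [List.foldr_cons, List.foldr_cons] at hxy
      rw [hxy, dist_self] at this
      exact this.not_gt hgap
    subst hik
    rw [ih (Nat.succ_injective hlen) (h.injective i hxy)]

-- If the next letters of two points of `A` with the common initial word `u`
-- differ, these points are far apart before `u.foldr S` is applied, so `u.foldr S` has small ratio.
lemma exists_length_eq_or_wordRatio_le (h : HasBoundedDistortion S ρ K q)
    (hsep : ∀ i k x y, i ≠ k → gap ≤ dist (S i x) (S k y)) (hcover : ∀ y, ∃ i x, S i x = y)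
    {A : Set X} (hA : A.Nonempty) {r : ℝ} (hAr : ∀ x ∈ A, ∀ y ∈ A, dist x y ≤ r) (n : ℕ) :
    ∃ u : List ι, A ⊆ range (u.foldr S) ∧
      (u.length = n ∨ ∀ z, wordRatio S ρ u z * gap ≤ K * r) := by
  induction n with
  | zero => exact ⟨[], fun y _ => ⟨y, rfl⟩, Or.inl rfl⟩
  | succ n ih =>
    obtain ⟨u, hAu, hlen | hbound⟩ := ih
    · obtain ⟨y, hy⟩ := hA
      obtain ⟨y', rfl⟩ := hAu hy
      obtain ⟨i, x, rfl⟩ := hcover y'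
      by_cases hext : A ⊆ range ((u ++ [i]).foldr S)
      · exact ⟨u ++ [i], hext, Or.inl (by simp [hlen])⟩
      obtain ⟨p, hp, hpi⟩ := not_subset.1 hext
      obtain ⟨p', rfl⟩ := hAu hp
      obtain ⟨k, x', rfl⟩ := hcover p'
      have hik : i ≠ k := by
        rintro rfl
        exact hpi ⟨x', by simp⟩
      refine ⟨u, hAu, Or.inr fun z => ?_⟩
      calc wordRatio S ρ u z * gap ≤ wordRatio S ρ u z * dist (S i x) (S k x') :=
            mul_le_mul_of_nonneg_left (hsep i k x x' hik) (wordRatio_pos h.ratio_pos u z).le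
        _ ≤ K * dist (u.foldr S (S i x)) (u.foldr S (S k x')) := h.le_dist u _ _ z
        _ ≤ K * r := mul_le_mul_of_nonneg_left (hAr _ hy _ hp) h.const_pos.le
    · exact ⟨u, hAu, Or.inr hbound⟩

lemma exists_wordRatio_le (h : HasBoundedDistortion S ρ K q) (hgap : 0 < gap)
    (hsep : ∀ i k x y, i ≠ k → gap ≤ dist (S i x) (S k y)) (hcover : ∀ y, ∃ i x, S i x = y)
    {A : Set X} (hA : A.Nonempty) {r : ℝ} (hr : 0 < r)
    (hAr : ∀ x ∈ A, ∀ y ∈ A, dist x y ≤ r) :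
    ∃ u : List ι, A ⊆ range (u.foldr S) ∧ ∀ z, wordRatio S ρ u z ≤ K * r / gap := by
  obtain ⟨n, hn⟩ := exists_pow_lt_of_lt_one (div_pos (mul_pos h.const_pos hr) hgap) h.bound_lt_one
  obtain ⟨u, hAu, hlen | hbound⟩ := h.exists_length_eq_or_wordRatio_le hsep hcover hA hAr n
  · refine ⟨u, hAu, fun z => (wordRatio_le_pow h.ratio_pos h.ratio_le u z).trans ?_⟩
    rw [hlen]
    exact hn.le
  · exact ⟨u, hAu, fun z => (le_div_iff₀ hgap).2 (hbound z)⟩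

lemma transferOperator_pow_indicator_le [Fintype ι] (h : HasBoundedDistortion S ρ K q)
    (hgap : 0 < gap) (hsep : ∀ i k x y, i ≠ k → gap ≤ dist (S i x) (S k y)) {A : Set X}
    {u : List ι} (hAu : A ⊆ range (u.foldr S)) (x : X) :
    (transferOperator S ρ t ^ u.length) (A.indicator 1) x ≤ wordRatio S ρ u x ^ t := by
  rw [transferOperator_pow_apply h.ratio_pos, Finset.sum_eq_single u.get]
  · rw [List.ofFn_get]
    exact mul_le_of_le_one_right (Real.rpow_nonneg (wordRatio_pos h.ratio_pos u x).le t)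
      (indicator_le_self' (fun _ _ => zero_le_one) _)
  · intro w _ hw
    rw [indicator_of_notMem, mul_zero]
    intro hwA
    obtain ⟨y, hy⟩ := hAu hwA
    have hwu := h.eq_of_foldr_eq hgap hsep (w := List.ofFn w) List.length_ofFn hy.symm
    exact hw (List.ofFn_injective (hwu.trans (List.ofFn_get u).symm))
  · exact fun hu => absurd (Finset.mem_univ _) hu

lemma exists_forall_transferOperator_pow_indicator_le [Fintype ι]
    (h : HasBoundedDistortion S ρ K q) (hgap : 0 < gap)
    (hsep : ∀ i k x y, i ≠ k → gap ≤ dist (S i x) (S k y)) (hcover : ∀ y, ∃ i x, S i x = y)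
    (ht : 0 ≤ t) (ha : 0 < a) (haf : ∀ x, a ≤ f x) (hf : f ≤ transferOperator S ρ t f)
    {A : Set X} {r : ℝ} (hr : 0 < r) (hAr : ∀ x ∈ A, ∀ y ∈ A, dist x y ≤ r) :
    ∃ n, ∀ N ≥ n, (transferOperator S ρ t ^ N) (A.indicator 1) ≤
      ((K * r / gap) ^ t / a) • (transferOperator S ρ t ^ N) f := by
  set T := transferOperator S ρ t
  set c := (K * r / gap) ^ t / a
  have hc : 0 ≤ c :=
    div_nonneg (Real.rpow_nonneg (div_nonneg (mul_nonneg h.const_pos.le hr.le) hgap.le) t) ha.le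
  obtain ⟨n, hn⟩ : ∃ n, (T ^ n) (A.indicator 1) ≤ c • f := by
    rcases A.eq_empty_or_nonempty with rfl | hA
    · refine ⟨0, fun x => ?_⟩
      simpa using mul_nonneg hc (ha.le.trans (haf x))
    obtain ⟨u, hAu, hu⟩ := h.exists_wordRatio_le hgap hsep hcover hA hr hAr
    refine ⟨u.length, fun x => (h.transferOperator_pow_indicator_le hgap hsep hAu x).trans ?_⟩
    calc wordRatio S ρ u x ^ t ≤ (K * r / gap) ^ t :=
          Real.rpow_le_rpow (wordRatio_pos h.ratio_pos u x).le (hu x) ht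
      _ = c * a := (div_mul_cancel₀ _ ha.ne').symm
      _ ≤ c * f x := mul_le_mul_of_nonneg_left (haf x) hc
  refine ⟨n, fun N hN => ?_⟩
  obtain ⟨m, rfl⟩ := exists_add_of_le hN
  have hmono : Monotone fun k : ℕ => (T ^ k) f := by
    simpa only [Module.End.pow_apply] using
      (transferOperator_mono h.ratio_pos).monotone_iterate_of_le_map hf
  calc (T ^ (n + m)) (A.indicator 1) = (T ^ m) ((T ^ n) (A.indicator 1)) := by
        rw [add_comm, pow_add, Module.End.mul_apply]
    _ ≤ (T ^ m) (c • f) := transferOperator_pow_mono h.ratio_pos m hn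
    _ = c • (T ^ m) f := map_smul _ _ _
    _ ≤ c • (T ^ (n + m)) f := smul_le_smul_of_nonneg_left (hmono (Nat.le_add_left m n)) hc

lemma one_le_mul_sum_of_cover [Fintype ι] [Nonempty X] (h : HasBoundedDistortion S ρ K q)
    (hgap : 0 < gap) (hsep : ∀ i k x y, i ≠ k → gap ≤ dist (S i x) (S k y))
    (hcover : ∀ y, ∃ i x, S i x = y) (ht : 0 ≤ t) (ha : 0 < a) (haf : ∀ x, a ≤ f x) (hb : 0 ≤ b)
    (hfb : ∀ x, f x ≤ b) (hf : f ≤ transferOperator S ρ t f) {F : Finset ℕ} {V : ℕ → Set X}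
    {r : ℕ → ℝ} (hr : ∀ n, 0 < r n) (hVr : ∀ n, ∀ x ∈ V n, ∀ y ∈ V n, dist x y ≤ r n)
    (hV : univ ⊆ ⋃ n ∈ F, V n) : 1 ≤ b * ∑ n ∈ F, (K * r n / gap) ^ t / a := by
  obtain ⟨x₀⟩ := ‹Nonempty X›
  choose N hN using fun n => h.exists_forall_transferOperator_pow_indicator_le hgap hsep hcover ht
    ha haf hf (hr n) (hVr n)
  set T := transferOperator S ρ t
  set M := F.sup N
  have hpos : 0 < (T ^ M) f x₀ := by
    rw [Module.End.pow_apply]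
    exact (ha.trans_le (haf x₀)).trans_le
      ((transferOperator_mono h.ratio_pos).monotone_iterate_of_le_map hf M.zero_le x₀)
  refine le_of_mul_le_mul_right ?_ hpos
  calc 1 * (T ^ M) f x₀ = (T ^ M) f x₀ := one_mul _
    _ ≤ (T ^ M) (b • ∑ n ∈ F, (V n).indicator 1) x₀ :=
      transferOperator_pow_mono h.ratio_pos M (le_smul_sum_indicator hb hfb hV) x₀
    _ = b * ∑ n ∈ F, (T ^ M) ((V n).indicator 1) x₀ := by
      simp only [map_smul, map_sum, Pi.smul_apply, Finset.sum_apply, smul_eq_mul]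
    _ ≤ b * ∑ n ∈ F, (K * r n / gap) ^ t / a * (T ^ M) f x₀ := mul_le_mul_of_nonneg_left
      (Finset.sum_le_sum fun n hn => hN n M (Finset.le_sup hn) x₀) hb
    _ = (b * ∑ n ∈ F, (K * r n / gap) ^ t / a) * (T ^ M) f x₀ := by
      rw [← Finset.sum_mul, mul_assoc]

theorem le_dimH_univ [Fintype ι] [CompactSpace X] [Nonempty X]
    (h : HasBoundedDistortion S ρ K q) (hgap : 0 < gap)
    (hsep : ∀ i k x y, i ≠ k → gap ≤ dist (S i x) (S k y)) (hcover : ∀ y, ∃ i x, S i x = y)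
    (ht : 0 ≤ t) (ha : 0 < a) (haf : ∀ x, a ≤ f x) (hfb : ∀ x, f x ≤ b)
    (hf : f ≤ transferOperator S ρ t f) : ENNReal.ofReal t ≤ dimH (univ : Set X) := by
  obtain ⟨x₀⟩ := ‹Nonempty X›
  have hb : 0 < b := ha.trans_le ((haf x₀).trans (hfb x₀))
  have hK := h.const_pos
  have hc : 0 < b * (K / gap) ^ t / a :=
    div_pos (mul_pos hb (Real.rpow_pos_of_pos (div_pos hK hgap) t)) ha
  refine le_dimH_of_forall_finite_cover isCompact_univ (inv_pos.2 hc) fun F V r hr hVr hV => ?_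
  rw [inv_le_iff_one_le_mul₀' hc]
  calc 1 ≤ b * ∑ n ∈ F, (K * r n / gap) ^ t / a :=
        h.one_le_mul_sum_of_cover hgap hsep hcover ht ha haf hb.le hfb hf hr hVr hV
    _ = b * (K / gap) ^ t / a * ∑ n ∈ F, r n ^ t := by
        simp only [mul_div_right_comm K _ gap, Real.mul_rpow (div_nonneg hK.le hgap.le) (hr _).le,
          Finset.mul_sum]
        exact Finset.sum_congr rfl fun n _ => by ring

end HasBoundedDistortion

/-- A polynomial with rational coefficients, listed from the lowest degree. Unlike `ℚ[X]`, such
lists can be multiplied, composed and bounded by kernel computation. -/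
abbrev CoeffList := List ℚ

namespace CoeffList

/-- The value of a polynomial at a real point. -/
noncomputable def eval : CoeffList → ℝ → ℝ
  | [], _ => 0
  | a :: p, x => a + x * eval p x

/-- The sum of two polynomials. -/
def add : CoeffList → CoeffList → CoeffList
  | [], q => q
  | a :: p, [] => a :: p
  | a :: p, b :: q => (a + b) :: add p q

/-- The product of a constant and a polynomial. -/
def smul (c : ℚ) (p : CoeffList) : CoeffList := p.map (c * ·)

/-- The product of two polynomials. -/
def mul : CoeffList → CoeffList → CoeffList
  | [], _ => []
  | a :: p, q => add (smul a q) (0 :: mul p q)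

/-- The composition of two polynomials, the second being substituted into the first. -/
def comp : CoeffList → CoeffList → CoeffList
  | [], _ => []
  | a :: p, q => add [a] (mul q (comp p q))

/-- The derivative of a polynomial. -/
def deriv : CoeffList → CoeffList
  | [] => []
  | _ :: p => add p (0 :: deriv p)

/-- The sum of `|aₖ| * r ^ k` over the coefficients `aₖ`, an upper bound for the absolute value of
the polynomial on `[-r, r]`. -/
def upper (r : ℚ) : CoeffList → ℚ
  | [] => 0
  | a :: p => |a| + r * upper r p

/-- The constant coefficient minus the sum of the other `|aₖ| * r ^ k`, a lower bound for the
polynomial on `[-r, r]`. -/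
def lower (r : ℚ) : CoeffList → ℚ
  | [] => 0
  | a :: p => a - r * upper r p

variable (p q A Q B : CoeffList) {r s e : ℚ} {x : ℝ}

lemma eval_add (x : ℝ) : eval (add p q) x = eval p x + eval q x := by
  induction p generalizing q with
  | nil => simp [add, eval]
  | cons a p ih =>
    cases q with
    | nil => simp [add, eval]
    | cons b q => simp only [add, eval, ih]; push_cast; ring

lemma eval_smul (c : ℚ) (x : ℝ) : eval (smul c p) x = c * eval p x := by
  induction p with
  | nil => simp [smul, eval]
  | cons a p ih =>
    simp only [smul, List.map_cons, eval] at ih ⊢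
    rw [ih]
    push_cast
    ring

lemma eval_mul (x : ℝ) : eval (mul p q) x = eval p x * eval q x := by
  induction p with
  | nil => simp [mul, eval]
  | cons a p ih => simp only [mul, eval, eval_add, eval_smul, ih]; push_cast; ring

lemma eval_comp (x : ℝ) : eval (comp p q) x = eval p (eval q x) := by
  induction p with
  | nil => simp [comp, eval]
  | cons a p ih => simp only [comp, eval, eval_add, eval_mul, ih]; ring

lemma eval_zero : eval p 0 = p.headD 0 := by
  cases p <;> simp [eval]

lemma hasDerivAt_eval (x : ℝ) : HasDerivAt (eval p) (eval (deriv p) x) x := by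
  induction p with
  | nil => exact hasDerivAt_const x 0
  | cons a p ih =>
    have h : HasDerivAt (fun y : ℝ => a + y * eval p y) (1 * eval p x + x * eval (deriv p) x) x :=
      ((hasDerivAt_id x).mul ih).const_add _
    refine h.congr_deriv ?_
    simp only [deriv, eval, eval_add]
    push_cast
    ring

lemma abs_eval_le_upper (hx : |x| ≤ r) : |eval p x| ≤ upper r p := by
  induction p with
  | nil => simp [eval, upper]
  | cons a p ih =>
    have hr : (0 : ℝ) ≤ r := (abs_nonneg x).trans hx
    calc |(a : ℝ) + x * eval p x| ≤ |(a : ℝ)| + |x| * |eval p x| := by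
          rw [← abs_mul]
          exact abs_add_le _ _
      _ ≤ |(a : ℝ)| + r * upper r p := by gcongr
      _ = upper r (a :: p) := by simp only [upper]; push_cast; rfl

lemma lower_le_eval (hx : |x| ≤ r) : (lower r p : ℝ) ≤ eval p x := by
  cases p with
  | nil => simp [eval, lower]
  | cons a p =>
    have h : |x * eval p x| ≤ r * upper r p := by
      rw [abs_mul]
      exact mul_le_mul hx (abs_eval_le_upper p hx) (abs_nonneg _) ((abs_nonneg x).trans hx)
    simp only [eval, lower]
    push_cast
    linarith [neg_abs_le (x * eval p x)]

variable {p} in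
lemma eval_pos (hp : 0 < lower r p) (hx : |x| ≤ r) : 0 < eval p x :=
  lt_of_lt_of_le (by exact_mod_cast hp) (lower_le_eval p hx)

/-- The function `log (A * Q ^ s / B)`. -/
noncomputable def logRatio (s : ℚ) (x : ℝ) : ℝ :=
  Real.log (eval A x) + s * Real.log (eval Q x) - Real.log (eval B x)

/-- The numerator of the derivative of `logRatio A Q B s` over the denominator `A * Q * B`. -/
def logRatioDerivNum (s : ℚ) : CoeffList :=
  add (mul B (add (mul Q (deriv A)) (smul s (mul (deriv Q) A))))
    (smul (-1) (mul (deriv B) (mul Q A)))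

variable {A Q B}

lemma hasDerivAt_logRatio (s : ℚ) (hA : eval A x ≠ 0) (hQ : eval Q x ≠ 0) (hB : eval B x ≠ 0) :
    HasDerivAt (logRatio A Q B s)
      (eval (logRatioDerivNum A Q B s) x / (eval A x * eval Q x * eval B x)) x := by
  refine HasDerivAt.congr_deriv ((((hasDerivAt_eval A x).log hA).add
    (((hasDerivAt_eval Q x).log hQ).const_mul (s : ℝ))).sub ((hasDerivAt_eval B x).log hB)) ?_
  simp only [logRatioDerivNum, eval_add, eval_smul, eval_mul]
  push_cast
  field_simp
  ring

lemma abs_eval_div_le (p : CoeffList) (hA : 0 < lower r A) (hQ : 0 < lower r Q)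
    (hB : 0 < lower r B) (hx : |x| ≤ r) :
    |eval p x / (eval A x * eval Q x * eval B x)| ≤
      upper r p / (lower r A * lower r Q * lower r B : ℚ) := by
  have hA₀ := eval_pos hA hx
  have hQ₀ := eval_pos hQ hx
  have hlower : ((lower r A * lower r Q * lower r B : ℚ) : ℝ) ≤ eval A x * eval Q x * eval B x := by
    push_cast
    exact mul_le_mul (mul_le_mul (lower_le_eval A hx) (lower_le_eval Q hx)
      (Rat.cast_nonneg.2 hQ.le) hA₀.le) (lower_le_eval B hx) (Rat.cast_nonneg.2 hB.le)
      (mul_pos hA₀ hQ₀).le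
  have hp := abs_eval_le_upper p hx
  rw [abs_div, abs_of_pos (mul_pos (mul_pos hA₀ hQ₀) (eval_pos hB hx))]
  exact div_le_div₀ ((abs_nonneg _).trans hp) hp
    (Rat.cast_pos.2 (mul_pos (mul_pos hA hQ) hB)) hlower

lemma abs_logRatio_sub_le (hA : 0 < lower r A) (hQ : 0 < lower r Q) (hB : 0 < lower r B)
    (he : upper r (logRatioDerivNum A Q B s) * r ≤ e * (lower r A * lower r Q * lower r B))
    (hx : |x| ≤ r) : |logRatio A Q B s x - logRatio A Q B s 0| ≤ e := by
  set N := logRatioDerivNum A Q B s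
  set L : ℚ := lower r A * lower r Q * lower r B
  have hL : (0 : ℝ) < L := by exact_mod_cast mul_pos (mul_pos hA hQ) hB
  have hr : (0 : ℝ) ≤ r := (abs_nonneg x).trans hx
  have hderiv (u : ℝ) (hu : u ∈ Icc (-(r : ℝ)) r) : HasDerivWithinAt (logRatio A Q B s)
      (eval N u / (eval A u * eval Q u * eval B u)) (Icc (-(r : ℝ)) r) u :=
    have hu' := abs_le.2 hu
    (hasDerivAt_logRatio s (eval_pos hA hu').ne' (eval_pos hQ hu').ne'
      (eval_pos hB hu').ne').hasDerivWithinAt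
  have hmean := (convex_Icc (-(r : ℝ)) r).norm_image_sub_le_of_norm_hasDerivWithin_le hderiv
    (fun u hu => abs_eval_div_le N hA hQ hB (abs_le.2 hu))
    (abs_le.1 (abs_zero.trans_le hr)) (abs_le.1 hx)
  rw [sub_zero, Real.norm_eq_abs, Real.norm_eq_abs] at hmean
  have hN : (0 : ℝ) ≤ upper r N := (abs_nonneg _).trans (abs_eval_le_upper N hx)
  calc |logRatio A Q B s x - logRatio A Q B s 0| ≤ upper r N / L * |x| := hmean
    _ ≤ upper r N / L * r := by gcongr
    _ ≤ e := by
      rw [div_mul_eq_mul_div, div_le_iff₀ hL]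
      exact_mod_cast he

lemma abs_logRatio_zero_le {l d : ℚ} (hA : 0 < A.headD 0) (hB : 0 < B.headD 0)
    (hs : |s| ≤ 1) (hQl : |Real.log (Q.headD 0 : ℚ) - l| ≤ d)
    (hBl : |Real.log ((B.headD 0 / A.headD 0 : ℚ) : ℝ) - (s * l : ℚ)| ≤ d) :
    |logRatio A Q B s 0| ≤ 2 * d := by
  have hA' : (A.headD 0 : ℝ) ≠ 0 := by exact_mod_cast hA.ne'
  have hB' : (B.headD 0 : ℝ) ≠ 0 := by exact_mod_cast hB.ne'
  have hs' : |(s : ℝ)| ≤ 1 := by exact_mod_cast hs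
  push_cast at hBl
  rw [Real.log_div hB' hA'] at hBl
  calc |logRatio A Q B s 0|
      = |s * (Real.log (Q.headD 0 : ℚ) - l)
          - (Real.log (B.headD 0 : ℚ) - Real.log (A.headD 0 : ℚ) - s * l)| := by
        simp only [logRatio, eval_zero]
        ring_nf
    _ ≤ |(s : ℝ)| * |Real.log (Q.headD 0 : ℚ) - l|
          + |Real.log (B.headD 0 : ℚ) - Real.log (A.headD 0 : ℚ) - s * l| := by
        rw [← abs_mul]
        exact abs_sub _ _
    _ ≤ 1 * d + d := by gcongr
    _ = 2 * d := by ring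

end CoeffList

/-- The `m`-th power of the Taylor polynomial of `exp` with `n` terms at `x / m`, a lower bound for
`exp x` if `0 ≤ x`. -/
def expLower (m n : ℕ) (x : ℚ) : ℚ := (∑ k ∈ Finset.range n, (x / m) ^ k / k.factorial) ^ m

/-- An upper bound for `exp x` if `0 ≤ x ≤ m`, obtained like `expLower` from the Taylor polynomial
of `exp` and a bound for its remainder. -/
def expUpper (m n : ℕ) (x : ℚ) : ℚ :=
  (∑ k ∈ Finset.range n, (x / m) ^ k / k.factorial +
    (x / m) ^ n * (n + 1) / (n.factorial * n)) ^ m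

section Exp

variable {m n : ℕ} {x : ℚ}

lemma exp_eq_exp_div_pow (hm : m ≠ 0) (x : ℝ) : Real.exp x = Real.exp (x / m) ^ m := by
  rw [← Real.exp_nat_mul, mul_div_cancel₀ x (by exact_mod_cast hm)]

lemma expLower_le_exp (hm : m ≠ 0) (n : ℕ) (hx : 0 ≤ x) : (expLower m n x : ℝ) ≤ Real.exp x := by
  have hx' : (0 : ℝ) ≤ (x : ℝ) / m := div_nonneg (by exact_mod_cast hx) m.cast_nonneg
  rw [exp_eq_exp_div_pow hm, expLower]
  push_cast
  gcongr
  exact Real.sum_le_exp_of_nonneg hx' n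

lemma exp_le_expUpper (hm : m ≠ 0) (hn : 0 < n) (hx : 0 ≤ x) (hxm : x ≤ m) :
    Real.exp x ≤ expUpper m n x := by
  have hx' : (0 : ℝ) ≤ (x : ℝ) / m := div_nonneg (by exact_mod_cast hx) m.cast_nonneg
  have hx1 : (x : ℝ) / m ≤ 1 := div_le_one_of_le₀ (by exact_mod_cast hxm) m.cast_nonneg
  rw [exp_eq_exp_div_pow hm, expUpper]
  push_cast
  gcongr
  exact Real.exp_bound' hx' hx1 hn

lemma abs_log_sub_le {q d : ℚ} (hm : m ≠ 0) (hn : 0 < n) (hd : 0 ≤ d) (hdx : d ≤ x)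
    (hxm : x - d ≤ m) (hup : expUpper m n (x - d) ≤ q) (hlow : q ≤ expLower m n (x + d)) :
    |Real.log q - x| ≤ d := by
  have hexp : Real.exp (x - d : ℚ) ≤ q :=
    (exp_le_expUpper hm hn (sub_nonneg.2 hdx) hxm).trans (by exact_mod_cast hup)
  have hq : (0 : ℝ) < q := (Real.exp_pos _).trans_le hexp
  have h1 := (Real.le_log_iff_exp_le hq).2 hexp
  have h2 : Real.log q ≤ (x + d : ℚ) := (Real.log_le_iff_le_exp hq).2
    (le_trans (by exact_mod_cast hlow) (expLower_le_exp hm n (add_nonneg (hd.trans hdx) hd)))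
  push_cast at h1 h2
  exact abs_le.2 ⟨by linarith, by linarith⟩

end Exp

namespace Vicsek

/-- The centre of the interval around the `i`-th part of the Julia set. -/
def center : Fin 3 → ℚ := ![-0.046, -0.417, -0.871]

/-- The radius of the interval around the `i`-th part of the Julia set. -/
def radius : Fin 3 → ℚ := ![0.046, 0.084, 0.038]

/-- The sign of the derivative of `RV` on the `i`-th part of the Julia set. -/
def orientation : Fin 3 → ℚ := ![1, -1, 1]

/-- The intervals containing the three parts of the Julia set, on each of which `RV` is injective
and takes every value in `[-1, 0]`. -/
def piece (i : Fin 3) : Set ℝ := {y | |y - center i| ≤ radius i}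

/-- The slope of the chord of `RV` between `a` and `b`, which is the derivative of `RV` for
`a = b`. -/
def chord (a b : ℝ) : ℝ := 36 * (a ^ 2 + a * b + b ^ 2) + 48 * (a + b) + 15

/-- The branch of the inverse of `RV` on `[-1, 0]` with values in `piece i`. -/
noncomputable def branch (i : Fin 3) : ℝ → ℝ := Function.invFunOn RV (piece i)

/-- The absolute value of the derivative of `branch i`. -/
noncomputable def branchRatio (i : Fin 3) (x : ℝ) : ℝ := |chord (branch i x) (branch i x)|⁻¹

lemma mem_piece_zero {y : ℝ} : y ∈ piece 0 ↔ -0.092 ≤ y ∧ y ≤ 0 := by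
  simp only [piece, center, radius, mem_ofPred_eq, abs_le, Matrix.cons_val]
  push_cast
  constructor <;> rintro ⟨h₁, h₂⟩ <;> constructor <;> linarith

lemma mem_piece_one {y : ℝ} : y ∈ piece 1 ↔ -0.501 ≤ y ∧ y ≤ -0.333 := by
  simp only [piece, center, radius, mem_ofPred_eq, abs_le, Matrix.cons_val]
  push_cast
  constructor <;> rintro ⟨h₁, h₂⟩ <;> constructor <;> linarith

lemma mem_piece_two {y : ℝ} : y ∈ piece 2 ↔ -0.909 ≤ y ∧ y ≤ -0.833 := by
  simp only [piece, center, radius, mem_ofPred_eq, abs_le, Matrix.cons_val]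
  push_cast
  constructor <;> rintro ⟨h₁, h₂⟩ <;> constructor <;> linarith

lemma piece_subset_Icc (i : Fin 3) : piece i ⊆ Icc (-1) 0 := by
  intro y hy
  rw [mem_Icc]
  match i with
  | 0 => rw [mem_piece_zero] at hy; constructor <;> linarith
  | 1 => rw [mem_piece_one] at hy; constructor <;> linarith
  | 2 => rw [mem_piece_two] at hy; constructor <;> linarith

lemma le_dist_of_mem_piece {i k : Fin 3} (hik : i ≠ k) {y z : ℝ} (hy : y ∈ piece i)
    (hz : z ∈ piece k) : 0.2 ≤ dist y z := by
  rw [Real.dist_eq, le_abs]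
  fin_cases i <;> fin_cases k <;>
    simp only [Fin.zero_eta, Fin.mk_one, Fin.reduceFinMk, mem_piece_zero, mem_piece_one,
      mem_piece_two, ne_eq, not_true_eq_false] at hy hz hik <;>
    first
      | (left; linarith)
      | (right; linarith)

lemma exists_mem_piece {y : ℝ} (hy : y ∈ Icc (-1) 0) (hRy : RV y ∈ Icc (-1) 0) :
    ∃ i, y ∈ piece i := by
  obtain ⟨h_neg_one_le, h_le_zero⟩ := hy
  obtain ⟨hR_neg_one_le, hR_le_zero⟩ := hRy
  have hfactor : RV y + 1 = (3 * y + 1) * (12 * y ^ 2 + 12 * y + 1) := by unfold RV; ring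
  unfold RV at hR_le_zero
  rcases lt_or_ge y (-0.909) with h | h
  · have hquad : 0 < 12 * y ^ 2 + 12 * y + 1 := by nlinarith
    nlinarith [mul_neg_of_neg_of_pos (by linarith : 3 * y + 1 < 0) hquad]
  rcases le_or_gt y (-0.833) with h' | h'
  · exact ⟨2, mem_piece_two.2 ⟨h, h'⟩⟩
  rcases lt_or_ge y (-0.501) with h | h
  · nlinarith [mul_pos_of_neg_of_neg (by linarith : y < 0) (by linarith : 6 * y + 3 < 0)]
  rcases le_or_gt y (-0.333) with h' | h'
  · exact ⟨1, mem_piece_one.2 ⟨h, h'⟩⟩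
  rcases lt_or_ge y (-0.092) with h | h
  · have hquad : 12 * y ^ 2 + 12 * y + 1 < 0 := by nlinarith
    nlinarith [mul_neg_of_pos_of_neg (by linarith : 0 < 3 * y + 1) hquad]
  · exact ⟨0, mem_piece_zero.2 ⟨h, h_le_zero⟩⟩

lemma continuous_RV : Continuous RV := by unfold RV; fun_prop

lemma exists_mem_piece_RV_eq (i : Fin 3) {x : ℝ} (hx : x ∈ Icc (-1) 0) :
    ∃ y ∈ piece i, RV y = x := by
  obtain ⟨h_neg_one_le, h_le_zero⟩ := hx
  match i with
  | 0 =>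
    obtain ⟨y, hy, h⟩ := intermediate_value_Icc (by norm_num : (-0.092 : ℝ) ≤ 0)
      continuous_RV.continuousOn
      (show x ∈ Icc _ _ by constructor <;> norm_num [RV] <;> linarith)
    exact ⟨y, mem_piece_zero.2 hy, h⟩
  | 1 =>
    obtain ⟨y, hy, h⟩ := intermediate_value_Icc' (by norm_num : (-0.501 : ℝ) ≤ -0.333)
      continuous_RV.continuousOn
      (show x ∈ Icc _ _ by constructor <;> norm_num [RV] <;> linarith)
    exact ⟨y, mem_piece_one.2 hy, h⟩
  | 2 =>
    obtain ⟨y, hy, h⟩ := intermediate_value_Icc (by norm_num : (-0.909 : ℝ) ≤ -0.833)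
      continuous_RV.continuousOn
      (show x ∈ Icc _ _ by constructor <;> norm_num [RV] <;> linarith)
    exact ⟨y, mem_piece_two.2 hy, h⟩

lemma branch_mem (i : Fin 3) {x : ℝ} (hx : x ∈ Icc (-1) 0) : branch i x ∈ piece i :=
  Function.invFunOn_mem (exists_mem_piece_RV_eq i hx)

lemma RV_branch (i : Fin 3) {x : ℝ} (hx : x ∈ Icc (-1) 0) : RV (branch i x) = x :=
  Function.invFunOn_eq (exists_mem_piece_RV_eq i hx)

lemma RV_sub_RV (a b : ℝ) : RV a - RV b = chord a b * (a - b) := by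
  unfold RV chord
  ring

lemma chord_eq_half_add_sub (a b : ℝ) :
    chord a b = (chord a a + chord b b) / 2 - 18 * (a - b) ^ 2 := by
  unfold chord
  ring

lemma four_le_orientation_mul_chord {i : Fin 3} {a b : ℝ} (ha : a ∈ piece i)
    (hb : b ∈ piece i) : 4 ≤ orientation i * chord a b := by
  have hsq {r : ℝ} (hab : a - b ≤ r) (hba : b - a ≤ r) : (a - b) ^ 2 ≤ r ^ 2 :=
    sq_le_sq.2 ((abs_sub_le_iff.2 ⟨hab, hba⟩).trans (le_abs_self r))
  rw [chord_eq_half_add_sub]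
  unfold chord
  match i with
  | 0 =>
    rw [mem_piece_zero] at ha hb
    have hab := hsq (r := 0.1) (by linarith) (by linarith)
    simp only [orientation, Matrix.cons_val]
    push_cast
    nlinarith
  | 1 =>
    rw [mem_piece_one] at ha hb
    simp only [orientation, Matrix.cons_val]
    push_cast
    nlinarith [mul_nonneg (sub_nonneg.2 ha.1) (sub_nonneg.2 ha.2),
      mul_nonneg (sub_nonneg.2 hb.1) (sub_nonneg.2 hb.2), sq_nonneg (a - b)]
  | 2 =>
    rw [mem_piece_two] at ha hb
    have hab := hsq (r := 0.1) (by linarith) (by linarith)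
    simp only [orientation, Matrix.cons_val]
    push_cast
    nlinarith [sq_nonneg (a + 5 / 6), sq_nonneg (b + 5 / 6)]

lemma abs_orientation (i : Fin 3) : |(orientation i : ℝ)| = 1 := by
  fin_cases i <;> simp [orientation]

lemma abs_chord_eq {i : Fin 3} {a b : ℝ} (ha : a ∈ piece i) (hb : b ∈ piece i) :
    |chord a b| = orientation i * chord a b := by
  rw [← one_mul |chord a b|, ← abs_orientation i, ← abs_mul]
  exact abs_of_nonneg (by linarith [four_le_orientation_mul_chord ha hb])

lemma four_le_abs_chord {i : Fin 3} {a b : ℝ} (ha : a ∈ piece i) (hb : b ∈ piece i) :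
    4 ≤ |chord a b| :=
  (four_le_orientation_mul_chord ha hb).trans_eq (abs_chord_eq ha hb).symm

lemma strictMonoOn_orientation_mul_RV (i : Fin 3) :
    StrictMonoOn (fun y => orientation i * RV y) (piece i) := by
  intro a ha b hb hab
  have hchord := four_le_orientation_mul_chord hb ha
  have hsub : orientation i * RV b - orientation i * RV a =
      orientation i * chord b a * (b - a) := by
    rw [← mul_sub, RV_sub_RV, mul_assoc]
  exact sub_pos.1 (hsub ▸ mul_pos (by linarith) (sub_pos.2 hab))

lemma injOn_RV (i : Fin 3) : InjOn RV (piece i) := fun _ ha _ hb h =>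
  (strictMonoOn_orientation_mul_RV i).injOn ha hb (congrArg ((orientation i : ℝ) * ·) h)

lemma abs_RV_sub_RV (a b : ℝ) : |RV a - RV b| = |chord a b| * |a - b| := by
  rw [RV_sub_RV, abs_mul]

lemma abs_sub_le_of_mem_piece {i : Fin 3} {a b : ℝ} (ha : a ∈ piece i) (hb : b ∈ piece i) :
    |a - b| ≤ 4⁻¹ * |RV a - RV b| := by
  rw [abs_RV_sub_RV]
  nlinarith [four_le_abs_chord ha hb, abs_nonneg (a - b)]

lemma abs_chord_sub_chord_le {a a' b : ℝ} (ha : a ∈ Icc (-1) 0) (ha' : a' ∈ Icc (-1) 0)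
    (hb : b ∈ Icc (-1) 0) :
    |chord a a' - chord b b| ≤ 200 * |a - b| + 200 * |a' - b| := by
  have hsub : chord a a' - chord b b =
      (36 * (a + b + a') + 48) * (a - b) + (36 * (a' + b + b) + 48) * (a' - b) := by
    unfold chord
    ring
  rw [mem_Icc] at ha ha' hb
  have hfst : |36 * (a + b + a') + 48| ≤ 200 := by rw [abs_le]; constructor <;> linarith
  have hsnd : |36 * (a' + b + b) + 48| ≤ 200 := by rw [abs_le]; constructor <;> linarith
  rw [hsub]
  refine (abs_add_le _ _).trans ?_
  rw [abs_mul, abs_mul]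
  gcongr

lemma le_exp_mul_of_abs_sub_le {u v δ : ℝ} (hv : 4 ≤ v) (huv : |u - v| ≤ 100 * δ) :
    u ≤ Real.exp (25 * δ) * v := by
  have hδ : 0 ≤ δ := by linarith [abs_nonneg (u - v)]
  calc u ≤ v + 100 * δ := by linarith [le_abs_self (u - v)]
    _ ≤ (25 * δ + 1) * v := by nlinarith
    _ ≤ Real.exp (25 * δ) * v :=
      mul_le_mul_of_nonneg_right (Real.add_one_le_exp _) (by linarith)

lemma abs_chord_le_exp_mul {i : Fin 3} {a a' b : ℝ} (ha : a ∈ piece i) (ha' : a' ∈ piece i)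
    (hb : b ∈ piece i) :
    |chord a a'| ≤ Real.exp (25 * max |RV a - RV b| |RV a' - RV b|) * |chord b b| ∧
      |chord b b| ≤ Real.exp (25 * max |RV a - RV b| |RV a' - RV b|) * |chord a a'| := by
  set δ := max |RV a - RV b| |RV a' - RV b|
  have hchord : |chord a a' - chord b b| ≤ 100 * δ := by
    linarith [abs_chord_sub_chord_le (piece_subset_Icc i ha) (piece_subset_Icc i ha')
      (piece_subset_Icc i hb), abs_sub_le_of_mem_piece ha hb, abs_sub_le_of_mem_piece ha' hb,
      le_max_left |RV a - RV b| |RV a' - RV b|, le_max_right |RV a - RV b| |RV a' - RV b|]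
  have habs := (abs_abs_sub_abs_le (chord a a') (chord b b)).trans hchord
  exact ⟨le_exp_mul_of_abs_sub_le (four_le_abs_chord hb hb) habs,
    le_exp_mul_of_abs_sub_le (four_le_abs_chord ha ha') (by rwa [abs_sub_comm])⟩

section JuliaSet

variable {J : Set ℝ} (heq : J = RV ⁻¹' J ∩ Icc (-1) 0)

include heq

lemma subset_Icc : J ⊆ Icc (-1) 0 := heq.subset.trans inter_subset_right

lemma exists_mem_piece_of_mem {x : ℝ} (hx : x ∈ J) : ∃ i, x ∈ piece i :=
  exists_mem_piece (subset_Icc heq hx) (subset_Icc heq (heq.subset hx).1)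

lemma mapsTo_branch (i : Fin 3) : MapsTo (branch i) J J := by
  intro x hx
  have hxI := subset_Icc heq hx
  rw [heq]
  exact ⟨by rwa [mem_preimage, RV_branch i hxI], piece_subset_Icc i (branch_mem i hxI)⟩

/-- The branches of the inverse of `RV` as self-maps of a set that is invariant under them. -/
noncomputable def juliaBranch (i : Fin 3) : J → J :=
  (mapsTo_branch heq i).restrict

lemma exists_juliaBranch_eq (y : J) : ∃ i x, juliaBranch heq i x = y := by
  obtain ⟨i, hi⟩ := exists_mem_piece_of_mem heq y.2
  have hR := (heq.subset y.2).1
  have hRI := subset_Icc heq hR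
  exact ⟨i, ⟨RV y, hR⟩, Subtype.ext (injOn_RV i (branch_mem i hRI) hi (RV_branch i hRI))⟩

lemma le_dist_juliaBranch (i k : Fin 3) (x y : J) (hik : i ≠ k) :
    0.2 ≤ dist (juliaBranch heq i x) (juliaBranch heq k y) :=
  le_dist_of_mem_piece hik (branch_mem i (subset_Icc heq x.2)) (branch_mem k (subset_Icc heq y.2))

lemma dist_eq_abs_chord_mul (i : Fin 3) (x y : J) : dist x y =
    |chord (branch i x) (branch i y)| * dist (juliaBranch heq i x) (juliaBranch heq i y) := by
  have h := abs_RV_sub_RV (branch i x) (branch i y)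
  rwa [RV_branch i (subset_Icc heq x.2), RV_branch i (subset_Icc heq y.2)] at h

theorem hasBoundedDistortion_juliaBranch : HasBoundedDistortion (juliaBranch heq)
    (fun i x => branchRatio i x) (Real.exp (25 * Metric.diam (univ : Set J) / (1 - 4⁻¹))) 4⁻¹ := by
  have hI (x : J) : (x : ℝ) ∈ Icc (-1) 0 := subset_Icc heq x.2
  have hfour (i : Fin 3) (x y : J) : 4 ≤ |chord (branch i x) (branch i y)| :=
    four_le_abs_chord (branch_mem i (hI x)) (branch_mem i (hI y))
  have hpos (i : Fin 3) (x y : J) : 0 < |chord (branch i x) (branch i y)| :=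
    four_pos.trans_le (hfour i x y)
  have hexp (i : Fin 3) (x y z : J) := abs_chord_le_exp_mul (branch_mem i (hI x))
    (branch_mem i (hI y)) (branch_mem i (hI z))
  simp only [RV_branch _ (hI _)] at hexp
  have : BoundedSpace J := ((Metric.isBounded_Icc _ _).subset (subset_Icc heq)).boundedSpace_subtype
  refine HasBoundedDistortion.of_le_exp_mul (by norm_num) (by norm_num) (by norm_num)
    (fun i x => inv_pos.2 (hpos i x x)) (fun i x => inv_anti₀ four_pos (hfour i x x))
    (fun i x y => ?_) (fun i x y z => ?_) (fun i x y z => ?_)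
  · rw [dist_eq_abs_chord_mul heq i x y, le_inv_mul_iff₀ four_pos]
    exact mul_le_mul_of_nonneg_right (hfour i x y) dist_nonneg
  · rw [dist_eq_abs_chord_mul heq i x y, branchRatio, ← mul_assoc, ← mul_assoc,
      mul_right_comm _ _⁻¹, ← div_eq_mul_inv]
    exact le_mul_of_one_le_left dist_nonneg ((one_le_div (hpos i z z)).2 (hexp i x y z).2)
  · rw [dist_eq_abs_chord_mul heq i x y, branchRatio, ← mul_assoc]
    exact mul_le_mul_of_nonneg_right
      ((inv_mul_le_iff₀' (hpos i z z)).2 (hexp i x y z).1) dist_nonneg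

end JuliaSet

section Certificate

/-- An approximation, found numerically, of the dimension of the Julia set. -/
def exponent : ℚ := 0.491954570052666344

/-- The polynomial `coeff i j`, evaluated at `x - center j`, approximates on `piece j` the summand
of the branch `i` in the transfer operator of exponent `exponent`, applied to its positive
eigenfunction. The values were found numerically. -/
def coeff : Fin 3 → Fin 3 → CoeffList :=
  ![![
      [266372125886636453, -55160968616173718, 26484495989002137, -14997019630054083,
       9191902216660264, -5894349515910197, 3892007705307037, -2623032192512554, 1794743553452948,
       -1242370208429641, 867964967741457, -610946859962327, 432705807251722, -308072068928559,
       221277374813437, -158674611871973],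
      [291477141934285601, -83672489452676927, 55465237885376638, -43599721302218877,
       37123397731887094, -33081679494127115, 30359927524806721, -28440662634766767,
       27049912331723053, -26028686306945685, 25278305616960709, -24734090155592649,
       24344504342461079, -24097064361389908, 24635494735563964, -24458710087271813],
      [347657899054110747, -188861673801964571, 237370546524548068, -356393709225998055,
       580250916633371170, -989132297997750658, 1736746678797952604, -3112967651983194305,
       5665170965049761446, -10430780780325801721, 19383435072542956038, -36290833739022223015,
       68356634450221121318, -129463141386131189218, 251400230541773127099,
       -477427184072953641302]],
    ![
      [403009894018988195, 58950972547270148, 117465876894818502, 85952322982733320,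
       120740637981425768, 127475713869450665, 164918219045007439, 197353120922874762,
       252606959655829134, 317551014537150322, 409163216893409550, 526383451383578174,
       684401809452163120, 892039437470113447, 1186727521218325694, 1563618180011414458],
      [394610728558094267, -9943623202245808, 85711744580492786, -13820449056037023,
       53111409900012448, -15565555499220942, 40244572291289782, -16726194935121273,
       33564269096745826, -17646145839753950, 29697778210234472, -18465120241987973,
       27369028736020125, -19252124559645245, 26727542008327531, -20512432822717738],
      [421153137875224995, -126955132875585412, 232476999953436989, -321747015830168798,
       547193507672647931, -929684510030364384, 1646646514731901070, -2960375270407897438,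
       5407182535710767852, -9981799376941342506, 18592462544845523495, -34878271742944448438,
       65809091379244722415, -124826857663187315269, 242735262158764650512,
       -461523766847400109051]],
    ![
      [324461259427651447, 118520734979884110, 103754934843496619, 107360762579132111,
       120352184295650248, 141192737581693367, 170576859882473840, 210345300365433646,
       263339133388195887, 333536996602235579, 426353232636605384, 549084085186721132,
       711468422721893086, 926737768522705965, 1230529995660467813, 1619768264155500836],
      [290882002424616057, 69971033866615939, 40932311632031058, 28023843912513916,
       20774299132548810, 16110095189280574, 12863108260727019, 10482423457142447,
       8672165610707962, 7258190394001944, 6130839569482095, 5217370013509540, 4466708589811705,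
       3844336253595374, 3395274703502708, 2960853207517540],
      [265583739882322953, 44739897457190344, 18756621873797982, 9084041104509697,
       4763517067277589, 2611701232243755, 1474035384622938, 849007106004695, 496405563190214,
       293615964073959, 175267837902599, 105404174761093, 63780943333855, 38795232138141,
       23752804137829, 14594205268422]]]

/-- An approximation of the eigenfunction on `piece j`, as a polynomial in `x - center j`. -/
def eigenPoly (j : Fin 3) : CoeffList := ((coeff 0 j).add (coeff 1 j)).add (coeff 2 j)

/-- The centre of an interval around the points of `piece i` that `RV` maps to `piece j`. -/
def subcenter : Fin 3 → Fin 3 → ℚ :=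
  ![![-0.003135, -0.03093, -0.07519],
    ![-0.49244, -0.43314, -0.35772],
    ![-0.83777, -0.86926, -0.90042]]

/-- The radius of an interval around the points of `piece i` that `RV` maps to `piece j`. -/
def subradius : Fin 3 → Fin 3 → ℚ :=
  ![![0.003135, 0.00693, 0.00454],
    ![0.00757, 0.01331, 0.00689],
    ![0.00444, 0.00639, 0.00236]]

/-- An approximation of `log |RV'|` at `subcenter i j`. -/
def logRate : Fin 3 → Fin 3 → ℚ :=
  ![![2.68785439500577509576, 2.49601471031248265781, 2.12731961130318730154],
    ![1.80575234589189640322, 1.84364514896075514514, 1.70856830823959819531],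
    ![2.33938035492484126562, 2.57697205135225314240, 2.78014429755743149323]]

/-- The Taylor expansion of `RV` at `a`. -/
def taylorRV (a : ℚ) : CoeffList :=
  [a * (6 * a + 3) * (6 * a + 5), 108 * a ^ 2 + 96 * a + 15, 108 * a + 48, 36]

/-- The Taylor expansion at `subcenter i j` of the composition with `RV` of the polynomial function
given by `coeff i j`. -/
def branchTaylor (i j : Fin 3) : CoeffList :=
  (coeff i j).comp (CoeffList.add [-center j] (taylorRV (subcenter i j)))

/-- The Taylor expansion of `|RV'|` at `subcenter i j`. -/
def rateTaylor (i j : Fin 3) : CoeffList :=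
  CoeffList.smul (orientation i) (taylorRV (subcenter i j)).deriv

/-- The Taylor expansion at `subcenter i j` of the approximate eigenfunction on `piece i`. -/
def eigenTaylor (i j : Fin 3) : CoeffList := (eigenPoly i).comp [subcenter i j - center i, 1]

lemma eval_taylorRV (a : ℚ) (x : ℝ) : (taylorRV a).eval x = RV (a + x) := by
  simp only [taylorRV, CoeffList.eval, RV]
  push_cast
  ring

lemma RV_ratCast (a : ℚ) : RV a = ((taylorRV a).headD 0 : ℚ) := by
  rw [← CoeffList.eval_zero, eval_taylorRV, add_zero]

variable (i j : Fin 3) (y : ℝ)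

lemma eval_branchTaylor :
    (branchTaylor i j).eval (y - subcenter i j) = (coeff i j).eval (RV y - center j) := by
  rw [branchTaylor, CoeffList.eval_comp, CoeffList.eval_add, eval_taylorRV, add_sub_cancel]
  simp only [CoeffList.eval]
  push_cast
  ring_nf

lemma eval_rateTaylor :
    (rateTaylor i j).eval (y - subcenter i j) = orientation i * chord y y := by
  rw [rateTaylor, CoeffList.eval_smul]
  simp only [taylorRV, CoeffList.deriv, CoeffList.add, CoeffList.eval, chord]
  push_cast
  ring

lemma eval_eigenTaylor :
    (eigenTaylor i j).eval (y - subcenter i j) = (eigenPoly i).eval (y - center i) := by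
  rw [eigenTaylor, CoeffList.eval_comp]
  simp only [CoeffList.eval]
  push_cast
  ring_nf

lemma eval_eigenPoly (x : ℝ) : (eigenPoly j).eval x = ∑ i, (coeff i j).eval x := by
  simp only [eigenPoly, CoeffList.eval_add, Fin.sum_univ_three]

variable {i j y}

lemma abs_sub_subcenter_le (hy : y ∈ piece i) (hRy : RV y ∈ piece j) :
    |y - subcenter i j| ≤ subradius i j := by
  have hcheck : ∀ i j,
      |subcenter i j - subradius i j - center i| ≤ radius i ∧
      |subcenter i j + subradius i j - center i| ≤ radius i ∧
      orientation i * (taylorRV (subcenter i j - subradius i j)).headD 0 ≤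
        orientation i * center j - radius j ∧
      orientation i * center j + radius j ≤
        orientation i * (taylorRV (subcenter i j + subradius i j)).headD 0 := by
    decide +kernel
  obtain ⟨hmem_left, hmem_right, hle, hge⟩ := hcheck i j
  have hleft : ((subcenter i j - subradius i j : ℚ) : ℝ) ∈ piece i := by
    rw [piece, mem_ofPred_eq]
    exact_mod_cast hmem_left
  have hright : ((subcenter i j + subradius i j : ℚ) : ℝ) ∈ piece i := by
    rw [piece, mem_ofPred_eq]
    exact_mod_cast hmem_right
  have hRy' : |orientation i * RV y - orientation i * center j| ≤ radius j := by
    rw [← mul_sub, abs_mul, abs_orientation, one_mul]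
    exact hRy
  rw [abs_le] at hRy' ⊢
  constructor
  · have hleft_le := ((strictMonoOn_orientation_mul_RV i).le_iff_le hleft hy).1 (by
      rw [RV_ratCast]
      refine le_trans (by exact_mod_cast hle) (?_ : ((_ - _ : ℚ) : ℝ) ≤ _)
      push_cast
      linarith)
    push_cast at hleft_le
    linarith
  · have hle_right := ((strictMonoOn_orientation_mul_RV i).le_iff_le hy hright).1 (by
      rw [RV_ratCast]
      refine le_trans (?_ : _ ≤ ((_ + _ : ℚ) : ℝ)) (by exact_mod_cast hge)
      push_cast
      linarith)
    push_cast at hle_right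
    linarith

variable (i j)

lemma lower_taylor_pos : 0 < (branchTaylor i j).lower (subradius i j) ∧
    0 < (rateTaylor i j).lower (subradius i j) ∧ 0 < (eigenTaylor i j).lower (subradius i j) := by
  revert i j
  decide +kernel

set_option maxRecDepth 100000 in
lemma upper_logRatioDerivNum_mul_le :
    (CoeffList.logRatioDerivNum (branchTaylor i j) (rateTaylor i j) (eigenTaylor i j)
      exponent).upper (subradius i j) * subradius i j ≤
    1 / 10 ^ 15 * ((branchTaylor i j).lower (subradius i j) *
      (rateTaylor i j).lower (subradius i j) * (eigenTaylor i j).lower (subradius i j)) := by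
  revert i j
  decide +kernel

lemma headD_taylor_pos : 0 < (branchTaylor i j).headD 0 ∧ 0 < (eigenTaylor i j).headD 0 := by
  revert i j
  decide +kernel

lemma abs_log_headD_rateTaylor_sub_le :
    |Real.log ((rateTaylor i j).headD 0 : ℚ) - logRate i j| ≤ (1 / 10 ^ 16 : ℚ) := by
  have hcheck : ∀ i j, 1 / 10 ^ 16 ≤ logRate i j ∧ logRate i j - 1 / 10 ^ 16 ≤ (8 : ℕ) ∧
      expUpper 8 18 (logRate i j - 1 / 10 ^ 16) ≤ (rateTaylor i j).headD 0 ∧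
      (rateTaylor i j).headD 0 ≤ expLower 8 18 (logRate i j + 1 / 10 ^ 16) := by
    decide +kernel
  obtain ⟨hpos, hle, hupper, hlower⟩ := hcheck i j
  exact abs_log_sub_le (by decide) (by decide) (by norm_num) hpos hle hupper hlower

lemma abs_log_headD_div_headD_sub_le :
    |Real.log (((eigenTaylor i j).headD 0 / (branchTaylor i j).headD 0 : ℚ) : ℝ) -
      (exponent * logRate i j : ℚ)| ≤ (1 / 10 ^ 16 : ℚ) := by
  have hcheck : ∀ i j, 1 / 10 ^ 16 ≤ exponent * logRate i j ∧
      exponent * logRate i j - 1 / 10 ^ 16 ≤ (8 : ℕ) ∧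
      expUpper 8 18 (exponent * logRate i j - 1 / 10 ^ 16) ≤
        (eigenTaylor i j).headD 0 / (branchTaylor i j).headD 0 ∧
      (eigenTaylor i j).headD 0 / (branchTaylor i j).headD 0 ≤
        expLower 8 18 (exponent * logRate i j + 1 / 10 ^ 16) := by
    decide +kernel
  obtain ⟨hpos, hle, hupper, hlower⟩ := hcheck i j
  exact abs_log_sub_le (by decide) (by decide) (by norm_num) hpos hle hupper hlower

variable {i j}

-- The logarithm is close to `0` at `subcenter i j` by the bounds on the leading coefficients, and
-- nearly constant by the bound on its derivative.
lemma abs_logRatio_taylor_le {x : ℝ} (hx : |x| ≤ subradius i j) :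
    |CoeffList.logRatio (branchTaylor i j) (rateTaylor i j) (eigenTaylor i j) exponent x| ≤
      12 / 10 ^ 16 := by
  obtain ⟨hA, hQ, hB⟩ := lower_taylor_pos i j
  obtain ⟨hA₀, hB₀⟩ := headD_taylor_pos i j
  have hvar := CoeffList.abs_logRatio_sub_le hA hQ hB (upper_logRatioDerivNum_mul_le i j) hx
  have hcenter := CoeffList.abs_logRatio_zero_le hA₀ hB₀ (by decide +kernel)
    (abs_log_headD_rateTaylor_sub_le i j) (abs_log_headD_div_headD_sub_le i j)
  push_cast at hvar hcenter
  linarith [abs_sub_abs_le_abs_sub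
    (CoeffList.logRatio (branchTaylor i j) (rateTaylor i j) (eigenTaylor i j) exponent x)
    (CoeffList.logRatio (branchTaylor i j) (rateTaylor i j) (eigenTaylor i j) exponent 0)]

end Certificate

/-- The approximate eigenfunction of the transfer operator, with the three parts of the Julia set
separated by `-0.6` and `-0.2`. -/
noncomputable def eigenFun (x : ℝ) : ℝ :=
  if -0.2 ≤ x then (eigenPoly 0).eval (x - center 0)
  else if -0.6 ≤ x then (eigenPoly 1).eval (x - center 1)
  else (eigenPoly 2).eval (x - center 2)

lemma eigenFun_eq_eval {i : Fin 3} {x : ℝ} (hx : x ∈ piece i) :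
    eigenFun x = (eigenPoly i).eval (x - center i) := by
  unfold eigenFun
  match i with
  | 0 =>
    rw [mem_piece_zero] at hx
    rw [if_pos (by linarith)]
  | 1 =>
    rw [mem_piece_one] at hx
    rw [if_neg (by linarith), if_pos (by linarith)]
  | 2 =>
    rw [mem_piece_two] at hx
    rw [if_neg (by linarith), if_neg (by linarith)]

lemma eigenFun_mem_Icc {i : Fin 3} {x : ℝ} (hx : x ∈ piece i) : eigenFun x ∈ Icc 1 (10 ^ 20) := by
  have hcheck : ∀ i, 1 ≤ (eigenPoly i).lower (radius i) ∧
      (eigenPoly i).upper (radius i) ≤ 10 ^ 20 := by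
    decide +kernel
  obtain ⟨hlower, hupper⟩ := hcheck i
  rw [eigenFun_eq_eval hx]
  exact ⟨le_trans (by exact_mod_cast hlower) (CoeffList.lower_le_eval _ hx),
    (le_abs_self _).trans ((CoeffList.abs_eval_le_upper _ hx).trans (by exact_mod_cast hupper))⟩

lemma eval_coeff_pos {i j : Fin 3} {y : ℝ} (hy : y ∈ piece i) (hRy : RV y ∈ piece j) :
    0 < (coeff i j).eval (RV y - center j) := by
  rw [← eval_branchTaylor]
  exact CoeffList.eval_pos (lower_taylor_pos i j).1 (abs_sub_subcenter_le hy hRy)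

lemma abs_log_eval_coeff_le {i j : Fin 3} {y : ℝ} (hy : y ∈ piece i) (hRy : RV y ∈ piece j) :
    |Real.log ((coeff i j).eval (RV y - center j)) + exponent * Real.log |chord y y| -
      Real.log (eigenFun y)| ≤ 12 / 10 ^ 16 := by
  have h := abs_logRatio_taylor_le (abs_sub_subcenter_le hy hRy)
  rwa [CoeffList.logRatio, eval_branchTaylor, eval_rateTaylor, eval_eigenTaylor,
    ← abs_chord_eq hy hy, ← eigenFun_eq_eval hy] at h

lemma one_le_log_abs_chord {i : Fin 3} {y : ℝ} (hy : y ∈ piece i) : 1 ≤ Real.log |chord y y| := by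
  have hfour := four_le_abs_chord hy hy
  rw [Real.le_log_iff_exp_le (by linarith)]
  linarith [Real.exp_one_lt_d9]

lemma inv_rpow_mul_eq_exp {u v : ℝ} (hu : 0 < u) (hv : 0 < v) (s : ℝ) :
    u⁻¹ ^ s * v = Real.exp (Real.log v - s * Real.log u) := by
  rw [Real.rpow_def_of_pos (inv_pos.2 hu), Real.log_inv, sub_eq_neg_add, Real.exp_add,
    Real.exp_log hv, neg_mul, mul_comm s]

section Comparison

variable {i j : Fin 3} {y s : ℝ}

lemma inv_rpow_mul_eigenFun_le (hs : exponent + 12 / 10 ^ 16 ≤ s) (hy : y ∈ piece i)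
    (hRy : RV y ∈ piece j) :
    |chord y y|⁻¹ ^ s * eigenFun y ≤ (coeff i j).eval (RV y - center j) := by
  rw [inv_rpow_mul_eq_exp (four_pos.trans_le (four_le_abs_chord hy hy))
    (one_pos.trans_le (eigenFun_mem_Icc hy).1), ← Real.le_log_iff_exp_le (eval_coeff_pos hy hRy)]
  nlinarith [(abs_le.1 (abs_log_eval_coeff_le hy hRy)).1, one_le_log_abs_chord hy]

lemma le_inv_rpow_mul_eigenFun (hs : s ≤ exponent - 12 / 10 ^ 16) (hy : y ∈ piece i)
    (hRy : RV y ∈ piece j) :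
    (coeff i j).eval (RV y - center j) ≤ |chord y y|⁻¹ ^ s * eigenFun y := by
  rw [inv_rpow_mul_eq_exp (four_pos.trans_le (four_le_abs_chord hy hy))
    (one_pos.trans_le (eigenFun_mem_Icc hy).1), ← Real.log_le_iff_le_exp (eval_coeff_pos hy hRy)]
  nlinarith [(abs_le.1 (abs_log_eval_coeff_le hy hRy)).2, one_le_log_abs_chord hy]

end Comparison

section JuliaSet

variable {J : Set ℝ} (heq : J = RV ⁻¹' J ∩ Icc (-1) 0) {s : ℝ}

include heq in
lemma eigenFun_mem_Icc_of_mem {x : ℝ} (hx : x ∈ J) : eigenFun x ∈ Icc 1 (10 ^ 20) :=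
  let ⟨_, hi⟩ := exists_mem_piece_of_mem heq hx
  eigenFun_mem_Icc hi

lemma transferOperator_eigenFun_le (hs : exponent + 12 / 10 ^ 16 ≤ s) :
    transferOperator (juliaBranch heq) (fun i (x : J) => branchRatio i x) s
        (fun x : J => eigenFun x) ≤
      fun x : J => eigenFun x := by
  intro x
  obtain ⟨j, hj⟩ := exists_mem_piece_of_mem heq x.2
  have hx := subset_Icc heq x.2
  simp only [transferOperator, LinearMap.coe_mk, AddHom.coe_mk, eigenFun_eq_eval hj,
    eval_eigenPoly]
  refine Finset.sum_le_sum fun i _ => ?_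
  have hle := inv_rpow_mul_eigenFun_le (j := j) hs (branch_mem i hx) (by rwa [RV_branch i hx])
  rwa [RV_branch i hx] at hle

lemma le_transferOperator_eigenFun (hs : s ≤ exponent - 12 / 10 ^ 16) :
    (fun x : J => eigenFun x) ≤
      transferOperator (juliaBranch heq) (fun i (x : J) => branchRatio i x) s
        (fun x : J => eigenFun x) := by
  intro x
  obtain ⟨j, hj⟩ := exists_mem_piece_of_mem heq x.2
  have hx := subset_Icc heq x.2
  simp only [transferOperator, LinearMap.coe_mk, AddHom.coe_mk, eigenFun_eq_eval hj,
    eval_eigenPoly]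
  refine Finset.sum_le_sum fun i _ => ?_
  have hle := le_inv_rpow_mul_eigenFun (j := j) hs (branch_mem i hx) (by rwa [RV_branch i hx])
  rwa [RV_branch i hx] at hle

end JuliaSet

end Vicsek

theorem stmt_10 (J : Set ℝ) (hsub : J ⊆ Set.Icc (-1) 0) (hne : J.Nonempty)
    (hcl : IsClosed J) (heq : J = RV ⁻¹' J ∩ Set.Icc (-1) 0)
    (hmin : ∀ J' : Set ℝ, J' ⊆ Set.Icc (-1) 0 → J'.Nonempty → IsClosed J' →
      J' = RV ⁻¹' J' ∩ Set.Icc (-1) 0 → J ⊆ J') :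
    ENNReal.ofReal 0.49195457005266 ≤ dimH J ∧
      dimH J ≤ ENNReal.ofReal 0.49195457005267 := by
  have : CompactSpace J := isCompact_iff_compactSpace.1 (isCompact_Icc.of_isClosed_subset hcl hsub)
  have : Nonempty J := hne.to_subtype
  have hdim : dimH J = dimH (univ : Set J) := by
    have himage := (isometry_subtype_coe : Isometry ((↑) : J → ℝ)).dimH_image univ
    rwa [image_univ, Subtype.range_coe] at himage
  have hsystem := Vicsek.hasBoundedDistortion_juliaBranch heq
  have hcover := Vicsek.exists_juliaBranch_eq heq
  have hbounds (x : J) := Vicsek.eigenFun_mem_Icc_of_mem heq x.2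
  rw [hdim]
  constructor
  · exact hsystem.le_dimH_univ (by norm_num) (Vicsek.le_dist_juliaBranch heq) hcover (by norm_num)
      one_pos (fun x => (hbounds x).1) (fun x => (hbounds x).2)
      (Vicsek.le_transferOperator_eigenFun heq (by norm_num [Vicsek.exponent]))
  · exact hsystem.dimH_univ_le hcover (by norm_num) one_pos (fun x => (hbounds x).1)
      (Vicsek.transferOperator_eigenFun_le heq (by norm_num [Vicsek.exponent]))
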